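/- arXiv:1410.2833 — 7 statements merged into one kernel-verified Lean document; each statement's English description precedes it below -/
import Mathlib

section
/- Let F be a family of accepted relations with a progression ⤳, and let P be an up-to technique that is finitely convergent, extensive, and compatible. Then P is sound: whenever P(R) is defined and R ⤳ P(R), there exists R' ∈ F with R ⊆ R'. -/
/-! By compatibility, a progression `R ⤳ P(R)` propagates to `Pⁿ(R) ⤳ Pⁿ⁺¹(R)` for every `n`
(`exists_prog_kiter`). For `n` beyond the convergence bound, the two sides coincide, so `Pⁿ(R)` is
contained in an accepted relation, and `R ⊆ Pⁿ(R)` by extensivity. -/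

/-- n-fold Kleisli iterate of a partial function on `Set α`. -/
def kiter {α : Type*} (P : Set α → Part (Set α)) : ℕ → Set α → Part (Set α)
  | 0, R => Part.some R
  | n+1, R => (kiter P n R).bind P

/-- All iterates of `P` are defined at `R`, contain `R`, and satisfy `Pⁿ(R) ⤳ Pⁿ⁺¹(R)`. -/
theorem exists_prog_kiter {α : Type*} {prog : Set α → Set α → Prop}
    {P : Set α → Part (Set α)}
    (hext : ∀ R A, A ∈ P R → R ⊆ A)
    (hcompat : ∀ R S, prog R S →
      (P R).Dom ∧ (P S).Dom ∧ ∀ A B, A ∈ P R → B ∈ P S → prog A B)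
    {R A : Set α} (hA : A ∈ P R) (hRA : prog R A) (n : ℕ) :
    ∃ B C, B ∈ kiter P n R ∧ C ∈ P B ∧ prog B C ∧ R ⊆ B := by
  induction n with
  | zero => exact ⟨R, A, Part.mem_some R, hA, hRA, subset_rfl⟩
  | succ n ih =>
    obtain ⟨B, C, hB, hC, hBC, hRB⟩ := ih
    obtain ⟨-, hdom, hmono⟩ := hcompat B C hBC
    exact ⟨C, (P C).get hdom, Part.mem_bind hB hC, Part.get_mem hdom,
      hmono _ _ hC (Part.get_mem hdom), hRB.trans (hext B C hC)⟩

theorem stmt_0 {α : Type*} (F : Set (Set α)) (prog : Set α → Set α → Prop)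
    (hprog : ∀ R, prog R R → ∃ R' ∈ F, R ⊆ R')
    (P : Set α → Part (Set α))
    (hconv : ∃ N : ℕ, ∀ n m : ℕ, N < n → N < m → kiter P n = kiter P m)
    (hext : ∀ R A, A ∈ P R → R ⊆ A)
    (hcompat : ∀ R S, prog R S →
      (P R).Dom ∧ (P S).Dom ∧ ∀ A B, A ∈ P R → B ∈ P S → prog A B) :
    ∀ R A, A ∈ P R → prog R A → ∃ R' ∈ F, R ⊆ R' := by
  intro R A hA hRA
  obtain ⟨N, hN⟩ := hconv
  obtain ⟨B, C, hB, hC, hBC, hRB⟩ := exists_prog_kiter hext hcompat hA hRA (N + 1)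
  have hC' : C ∈ kiter P (N + 2) R := Part.mem_bind hB hC
  rw [hN (N + 2) (N + 1) (by omega) (by omega)] at hC'
  obtain rfl := Part.mem_unique hB hC'
  obtain ⟨R', hR', hBR'⟩ := hprog B hBC
  exact ⟨R', hR', hRB.trans hBR'⟩
end

section
/- Let F be a family of accepted relations with a progression ⤳, and let P be an up-to technique that is finitely convergent, extensive, and respectfully compatible. Then P is sound: whenever P(R) is defined and R ⤳ P(R), there exists R' ∈ F with R ⊆ R'. -/
theorem stmt_1 {α : Type*} (F : Set (Set α)) (prog : Set α → Set α → Prop)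
    (hprog : ∀ R, prog R R → ∃ R' ∈ F, R ⊆ R')
    (P : Set α → Part (Set α))
    (hconv : ∃ N : ℕ, ∀ n m : ℕ, N < n → N < m → kiter P n = kiter P m)
    (hext : ∀ R A, A ∈ P R → R ⊆ A)
    (hrespcompat : ∀ R S, R ⊆ S → prog R S →
      (P R).Dom ∧ (P S).Dom ∧ ∀ A B, A ∈ P R → B ∈ P S → A ⊆ B ∧ prog A B) :
    ∀ R A, A ∈ P R → prog R A → ∃ R' ∈ F, R ⊆ R' := by
  intro R A hA hRA
  have chain : ∀ n, ∃ X Y, X ∈ kiter P n R ∧ Y ∈ P X ∧ R ⊆ X ∧ prog X Y := by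
    intro n
    induction n with
    | zero => exact ⟨R, A, Part.mem_some R, hA, subset_rfl, hRA⟩
    | succ n ih =>
      obtain ⟨X, Y, hX, hY, hRX, hXY⟩ := ih
      obtain ⟨-, hdom, hmono⟩ := hrespcompat X Y (hext X Y hY) hXY
      exact ⟨Y, (P Y).get hdom, Part.mem_bind hX hY, Part.get_mem hdom,
        hRX.trans (hext X Y hY), (hmono Y _ hY (Part.get_mem hdom)).2⟩
  obtain ⟨N, hN⟩ := hconv
  obtain ⟨X, Y, hX, hY, hRX, hXY⟩ := chain (N + 1)
  have hY' : Y ∈ kiter P (N + 2) R := Part.mem_bind hX hY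
  rw [hN (N + 2) (N + 1) (by omega) (by omega)] at hY'
  obtain rfl : X = Y := Part.mem_unique hX hY'
  obtain ⟨R', hF, hXR'⟩ := hprog X hXY
  exact ⟨R', hF, hRX.trans hXR'⟩
end

section
/- Let F be a family of accepted relations with a progression ⤳. If P and Q are two extensive, compatible, and finitely convergent up-to techniques that commute, then Q∘P is sound: whenever (Q∘P)(R) is defined and R ⤳ (Q∘P)(R), there exists R' ∈ F with R ⊆ R'. -/
/-!
Put `T = Q ∘ P`. If `R ⤳ T R`, compatibility of `P` and `Q` makes every iterate `Tⁿ R` defined, with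
`Tⁿ R ⤳ Tⁿ⁺¹ R`, and extensivity gives `R ⊆ Tⁿ R` (`exists_kiter_prog`). Since `P` and `Q` commute,
`Tⁿ = Qⁿ ∘ Pⁿ` (`kiter_kcomp`), so finite convergence of `P` and `Q` forces `Tⁿ R = Tⁿ⁺¹ R` for
large `n`. Then `Tⁿ R ⤳ Tⁿ R`, and the progression property yields an accepted relation containing
`Tⁿ R ⊇ R`.
-/

/-- Kleisli composition of partial functions on `Set α` (apply `P` first, then `Q`). -/
def kcomp {α : Type*} (Q P : Set α → Part (Set α)) : Set α → Part (Set α) :=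
  fun R => (P R).bind Q

theorem kiter_bind_comm {α : Type*} {P Q : Set α → Part (Set α)}
    (hcomm : kcomp P Q = kcomp Q P) (n : ℕ) (R : Set α) :
    (kiter Q n R).bind P = (P R).bind (kiter Q n) := by
  induction n with
  | zero =>
    have h : kiter Q 0 = Part.some := rfl
    rw [h, Part.bind_some_right, Part.bind_some]
  | succ n ih =>
    have hc : ∀ S, (Q S).bind P = (P S).bind Q := fun S => congrFun hcomm S
    have h : kiter Q (n + 1) = fun S => (kiter Q n S).bind Q := rfl
    simp only [h]
    rw [Part.bind_assoc]
    simp only [hc]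
    rw [← Part.bind_assoc, ih, Part.bind_assoc]

theorem kiter_kcomp {α : Type*} {P Q : Set α → Part (Set α)}
    (hcomm : kcomp P Q = kcomp Q P) (n : ℕ) (R : Set α) :
    kiter (kcomp Q P) n R = (kiter P n R).bind (kiter Q n) := by
  induction n with
  | zero => exact (Part.bind_some R _).symm
  | succ n ih =>
    have hQ : kiter Q (n + 1) = fun S => (kiter Q n S).bind Q := rfl
    change (kiter (kcomp Q P) n R).bind (fun S => (P S).bind Q)
      = ((kiter P n R).bind P).bind (kiter Q (n + 1))
    rw [ih, hQ, ← Part.bind_assoc, ← Part.bind_assoc, Part.bind_assoc (kiter P n R),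
      Part.bind_assoc (kiter P n R)]
    simp only [kiter_bind_comm hcomm]
    simp only [Part.bind_assoc]

/-- Along the iterates of `T = Q ∘ P` from `R`, each one progresses to the next. -/
theorem exists_kiter_prog {α : Type*} {prog : Set α → Set α → Prop}
    {P Q : Set α → Part (Set α)}
    (hextP : ∀ R A, A ∈ P R → R ⊆ A)
    (hextQ : ∀ R A, A ∈ Q R → R ⊆ A)
    (hcompatP : ∀ R S, prog R S →
      (P R).Dom ∧ (P S).Dom ∧ ∀ A B, A ∈ P R → B ∈ P S → prog A B)
    (hcompatQ : ∀ R S, prog R S →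
      (Q R).Dom ∧ (Q S).Dom ∧ ∀ A B, A ∈ Q R → B ∈ Q S → prog A B)
    {R A : Set α} (hA : A ∈ kcomp Q P R) (hRA : prog R A) (n : ℕ) :
    ∃ B C, B ∈ kiter (kcomp Q P) n R ∧ C ∈ kcomp Q P B ∧ prog B C ∧ R ⊆ B := by
  induction n with
  | zero => exact ⟨R, A, Part.mem_some R, hA, hRA, subset_rfl⟩
  | succ n ih =>
    obtain ⟨B, C, hB, hC, hBC, hRB⟩ := ih
    obtain ⟨-, hPC, hP⟩ := hcompatP B C hBC
    obtain ⟨B₁, hB₁, hCB₁⟩ := Part.mem_bind_iff.1 hC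
    have h₁ := hP B₁ _ hB₁ (Part.get_mem hPC)
    obtain ⟨-, hQC, hQ⟩ := hcompatQ _ _ h₁
    exact ⟨C, _, Part.mem_bind hB hC, Part.mem_bind (Part.get_mem hPC) (Part.get_mem hQC),
      hQ C _ hCB₁ (Part.get_mem hQC),
      hRB.trans ((hextP _ _ hB₁).trans (hextQ _ _ hCB₁))⟩

theorem stmt_7 {α : Type*} (F : Set (Set α)) (prog : Set α → Set α → Prop)
    (hprog : ∀ R, prog R R → ∃ R' ∈ F, R ⊆ R')
    (P Q : Set α → Part (Set α))
    (hextP : ∀ R A, A ∈ P R → R ⊆ A)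
    (hextQ : ∀ R A, A ∈ Q R → R ⊆ A)
    (hcompatP : ∀ R S, prog R S →
      (P R).Dom ∧ (P S).Dom ∧ ∀ A B, A ∈ P R → B ∈ P S → prog A B)
    (hcompatQ : ∀ R S, prog R S →
      (Q R).Dom ∧ (Q S).Dom ∧ ∀ A B, A ∈ Q R → B ∈ Q S → prog A B)
    (hconvP : ∃ N : ℕ, ∀ n m : ℕ, N < n → N < m → kiter P n = kiter P m)
    (hconvQ : ∃ N : ℕ, ∀ n m : ℕ, N < n → N < m → kiter Q n = kiter Q m)
    (hcomm : kcomp P Q = kcomp Q P) :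
    ∀ R A, A ∈ kcomp Q P R → prog R A → ∃ R' ∈ F, R ⊆ R' := by
  intro R A hA hRA
  obtain ⟨N, hN⟩ := hconvP
  obtain ⟨M, hM⟩ := hconvQ
  obtain ⟨B, C, hB, hC, hBC, hRB⟩ :=
    exists_kiter_prog hextP hextQ hcompatP hcompatQ hA hRA (N + M + 1)
  have hC' : C ∈ kiter (kcomp Q P) (N + M + 1 + 1) R := Part.mem_bind hB hC
  rw [kiter_kcomp hcomm, hN (N + M + 1 + 1) (N + M + 1) (by omega) (by omega),
    hM (N + M + 1 + 1) (N + M + 1) (by omega) (by omega), ← kiter_kcomp hcomm] at hC'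
  obtain rfl := Part.mem_unique hB hC'
  obtain ⟨R', hR', hBR'⟩ := hprog B hBC
  exact ⟨R', hR', hRB.trans hBR'⟩
end

section
/- Let F be a family of accepted relations with a progression ⤳, and let P, Q : Set α → Set α be two everywhere-defined up-to techniques that are monotone, finitely convergent, compatible, and extensive, such that (Q∘P)(R) ⊆ (P∘Q)(R) for all R, and such that for all R, R ⤳ (Q∘P)(R) implies R ⤳ Q(R). Then whenever R ⤳ (Q∘P)(R), there exists R' ∈ F with R ⊆ R'. -/
/-!
From `R ⤳ Q (P R)` one gets `R ⤳ Q R`, and compatibility of `Q` gives `Qⁿ R ⤳ Qⁿ⁺¹ R` for all `n`.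
Since the iterates of `Q` are eventually constant, some `Qⁿ R` progresses to itself, hence lies in
an accepted relation; it contains `R` because `Q` is extensive.
-/

theorem stmt_9 {α : Type*} (F : Set (Set α)) (prog : Set α → Set α → Prop)
    (hprog : ∀ R, prog R R → ∃ R' ∈ F, R ⊆ R')
    (P Q : Set α → Set α)
    (hPmono : Monotone P) (hQmono : Monotone Q)
    (hPconv : ∃ N : ℕ, ∀ n m : ℕ, N < n → N < m → P^[n] = P^[m])
    (hQconv : ∃ N : ℕ, ∀ n m : ℕ, N < n → N < m → Q^[n] = Q^[m])
    (hPcompat : ∀ R S, prog R S → prog (P R) (P S))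
    (hQcompat : ∀ R S, prog R S → prog (Q R) (Q S))
    (hPext : ∀ R, R ⊆ P R) (hQext : ∀ R, R ⊆ Q R)
    (hcomm : ∀ R : Set α, Q (P R) ⊆ P (Q R))
    (himpl : ∀ R, prog R (Q (P R)) → prog R (Q R)) :
    ∀ R, prog R (Q (P R)) → ∃ R' ∈ F, R ⊆ R' := by
  intro R hR
  obtain ⟨N, hN⟩ := hQconv
  -- By `himpl`, `R ⤳ Q R`; compatibility pushes this along the iterates of `Q`.
  have hiter : ∀ n : ℕ, prog (Q^[n] R) (Q^[n + 1] R) := by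
    intro n
    induction n with
    | zero => exact himpl R hR
    | succ n ih =>
      rw [Function.iterate_succ_apply' Q n R, Function.iterate_succ_apply' Q (n + 1) R]
      exact hQcompat _ _ ih
  have hsub : ∀ n : ℕ, R ⊆ Q^[n] R := by
    intro n
    induction n with
    | zero => exact subset_rfl
    | succ n ih =>
      rw [Function.iterate_succ_apply' Q n R]
      exact ih.trans (hQext _)
  -- Beyond `N` the iterates are constant, so `Q^[N + 1] R` progresses to itself.
  have hfix : prog (Q^[N + 1] R) (Q^[N + 1] R) := by
    have h := hiter (N + 1)
    rwa [hN (N + 1 + 1) (N + 1) (by omega) (by omega)] at h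
  obtain ⟨R', hR', hle⟩ := hprog _ hfix
  exact ⟨R', hR', (hsub _).trans hle⟩
end

section
/- Let F be a family of accepted relations whose progression ⤳ is continuous, and let P : Set α → Set α be a compatible, extensive up-to technique. Then P is sound, and moreover whenever R ⤳ P(R), one has νP(R) ⤳ νP(R), where νP(R) = ⋃_{i∈ℕ} Pⁱ(R). -/
/-!
If `R ⤳ P R`, compatibility gives `Pⁱ R ⤳ Pⁱ⁺¹ R` for every `i`, and extensivity makes both
sequences ascending chains. Their unions are both `νP(R) = ⋃ i, Pⁱ R`, so continuity yields
`νP(R) ⤳ νP(R)`. Soundness follows because `R = P⁰ R ⊆ νP(R)`.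
-/

theorem stmt_11 {α : Type*} (F : Set (Set α)) (prog : Set α → Set α → Prop)
    (hprog : ∀ R, prog R R → ∃ R' ∈ F, R ⊆ R')
    (hcont : ∀ R S : ℕ → Set α, Monotone R → Monotone S →
      (∀ i, prog (R i) (S i)) → prog (⋃ i, R i) (⋃ i, S i))
    (P : Set α → Set α)
    (hcompat : ∀ R S, prog R S → prog (P R) (P S))
    (hext : ∀ R, R ⊆ P R) :
    (∀ R, prog R (P R) → ∃ R' ∈ F, R ⊆ R') ∧
    (∀ R, prog R (P R) → prog (⋃ i, P^[i] R) (⋃ i, P^[i] R)) := by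
  have key : ∀ R, prog R (P R) → prog (⋃ i, P^[i] R) (⋃ i, P^[i] R) := by
    intro R hR
    have hmono : Monotone fun i => P^[i] R := monotone_nat_of_le_succ fun n => by
      rw [Function.iterate_succ_apply']
      exact hext _
    have hstep : ∀ i, prog (P^[i] R) (P^[i + 1] R) := by
      intro i
      induction i with
      | zero => exact hR
      | succ n ih =>
        rw [Function.iterate_succ_apply' P (n + 1), Function.iterate_succ_apply' P n]
        rw [Function.iterate_succ_apply' P n] at ih
        exact hcompat _ _ ih
    have h := hcont (fun i => P^[i] R) (fun i => P^[i + 1] R) hmono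
      (fun i j hij => hmono (Nat.succ_le_succ hij)) hstep
    -- Dropping the first term of an ascending chain does not change its union.
    have hshift : (⋃ i, P^[i + 1] R) = ⋃ i, P^[i] R := hmono.iSup_nat_add 1
    rwa [hshift] at h
  refine ⟨fun R hR => ?_, key⟩
  obtain ⟨R', hR', hsub⟩ := hprog _ (key R hR)
  exact ⟨R', hR', (Set.subset_iUnion (fun i => P^[i] R) 0).trans hsub⟩
end

section
/- Let F be a family of accepted relations whose progression ⤳ is continuous, and let P, Q : Set α → Set α be two compatible, extensive up-to techniques. Then the composite Q∘P is sound: whenever R ⤳ (Q∘P)(R), there exists R' ∈ F with R ⊆ R'. -/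
theorem stmt_12 {α : Type*} (F : Set (Set α)) (prog : Set α → Set α → Prop)
    (hprog : ∀ R, prog R R → ∃ R' ∈ F, R ⊆ R')
    (hcont : ∀ R S : ℕ → Set α, Monotone R → Monotone S →
      (∀ i, prog (R i) (S i)) → prog (⋃ i, R i) (⋃ i, S i))
    (P Q : Set α → Set α)
    (hPcompat : ∀ R S, prog R S → prog (P R) (P S))
    (hQcompat : ∀ R S, prog R S → prog (Q R) (Q S))
    (hPext : ∀ R, R ⊆ P R) (hQext : ∀ R, R ⊆ Q R) :
    ∀ R, prog R (Q (P R)) → ∃ R' ∈ F, R ⊆ R' := by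
  intro R hR
  -- The iterates of `Q ∘ P` at `R` ascend by extensivity, and each progresses to the next by
  -- compatibility; by continuity their union progresses to itself.
  let T : ℕ → Set α := fun n => Nat.rec R (fun _ X => Q (P X)) n
  have hT : Monotone T :=
    monotone_nat_of_le_succ fun n => (hPext (T n)).trans (hQext (P (T n)))
  have hstep : ∀ n, prog (T n) (T (n + 1)) := by
    intro n
    induction n with
    | zero => exact hR
    | succ n ih => exact hQcompat _ _ (hPcompat _ _ ih)
  have hU := hcont T (fun n => T (n + 1)) hT (fun _ _ h => hT (Nat.succ_le_succ h)) hstep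
  rw [hT.iUnion_nat_add 1] at hU
  obtain ⟨R', hR', hsub⟩ := hprog _ hU
  exact ⟨R', hR', (Set.subset_iUnion T 0).trans hsub⟩
end

section
/- Let F be a family of accepted relations whose progression ⤳ is continuous, and let P : Set α → Set α be a compatible, extensive up-to technique. Then the function νP, given by νP(R) = ⋃_{i∈ℕ} Pⁱ(R), is itself a compatible, extensive, and sound up-to technique. -/
/-!
Extensivity makes the iterates `Pⁱ(R)` an ascending chain, so continuity turns
`Pⁱ(R) ⤳ Pⁱ(S)` into `νP(R) ⤳ νP(S)`. Soundness of `νP` is an instance of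
`sound_of_compatible_extensive`: every compatible extensive `Q` is sound, because `R ⤳ Q(R)` gives
`Qⁱ(R) ⤳ Qⁱ⁺¹(R)`, and both chains have union `νQ(R)`, so `νQ(R) ⤳ νQ(R)`. It is applied with
`Q = νP`; no monotonicity of `P` and no idempotence of `νP` is needed.
-/

theorem monotone_iterate_of_extensive {α : Type*} {P : Set α → Set α} (hext : ∀ R, R ⊆ P R)
    (R : Set α) : Monotone fun i : ℕ => P^[i] R :=
  monotone_nat_of_le_succ fun i => by
    rw [Function.iterate_succ_apply']
    exact hext _

theorem prog_iterate {α : Type*} {prog : Set α → Set α → Prop} {P : Set α → Set α}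
    (hcompat : ∀ R S, prog R S → prog (P R) (P S)) {R S : Set α} (h : prog R S) (i : ℕ) :
    prog (P^[i] R) (P^[i] S) := by
  induction i with
  | zero => exact h
  | succ i ih =>
    rw [Function.iterate_succ_apply', Function.iterate_succ_apply']
    exact hcompat _ _ ih

theorem sound_of_compatible_extensive {α : Type*} (F : Set (Set α)) (prog : Set α → Set α → Prop)
    (hprog : ∀ R, prog R R → ∃ R' ∈ F, R ⊆ R')
    (hcont : ∀ R S : ℕ → Set α, Monotone R → Monotone S →
      (∀ i, prog (R i) (S i)) → prog (⋃ i, R i) (⋃ i, S i))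
    (Q : Set α → Set α)
    (hcompat : ∀ R S, prog R S → prog (Q R) (Q S))
    (hext : ∀ R, R ⊆ Q R) (R : Set α) (h : prog R (Q R)) : ∃ R' ∈ F, R ⊆ R' := by
  have hmono := monotone_iterate_of_extensive hext R
  have hstep : prog (⋃ i, Q^[i] R) (⋃ i, Q^[i + 1] R) :=
    hcont (fun i => Q^[i] R) (fun i => Q^[i + 1] R) hmono
      (fun i j hij => hmono (Nat.succ_le_succ hij)) fun i => prog_iterate hcompat h i
  have hshift : (⋃ i, Q^[i + 1] R) = ⋃ i, Q^[i] R := hmono.iSup_nat_add 1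
  rw [hshift] at hstep
  obtain ⟨R', hR', hsub⟩ := hprog _ hstep
  exact ⟨R', hR', (Set.subset_iUnion (fun i => Q^[i] R) 0).trans hsub⟩

theorem stmt_13 {α : Type*} (F : Set (Set α)) (prog : Set α → Set α → Prop)
    (hprog : ∀ R, prog R R → ∃ R' ∈ F, R ⊆ R')
    (hcont : ∀ R S : ℕ → Set α, Monotone R → Monotone S →
      (∀ i, prog (R i) (S i)) → prog (⋃ i, R i) (⋃ i, S i))
    (P : Set α → Set α)
    (hcompat : ∀ R S, prog R S → prog (P R) (P S))
    (hext : ∀ R, R ⊆ P R) :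
    (∀ R S, prog R S → prog (⋃ i, P^[i] R) (⋃ i, P^[i] S)) ∧
    (∀ R, R ⊆ ⋃ i, P^[i] R) ∧
    (∀ R, prog R (⋃ i, P^[i] R) → ∃ R' ∈ F, R ⊆ R') := by
  have hνcompat : ∀ R S, prog R S → prog (⋃ i, P^[i] R) (⋃ i, P^[i] S) := fun R S h =>
    hcont _ _ (monotone_iterate_of_extensive hext R) (monotone_iterate_of_extensive hext S)
      (prog_iterate hcompat h)
  have hνext : ∀ R, R ⊆ ⋃ i, P^[i] R := fun R => Set.subset_iUnion (fun i => P^[i] R) 0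
  exact ⟨hνcompat, hνext, sound_of_compatible_extensive F prog hprog hcont
    (fun R => ⋃ i, P^[i] R) hνcompat hνext⟩
end
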